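/- Fix x ∈ ℚ and cyclic orders y₀, y₁ ∈ CO_4 with successor permutations τ₀, τ₁, such that y₁ is neither y₀ nor the reversal of y₀. Define a profile p on ROLO ballots by: p(b) = 1 if b = (a, τ₀⁻¹(a), τ₀(a)) or b = (a, τ₀(a), τ₀⁻¹(a)) for some a ∈ Fin 4 (the eight ballots fully matching y₀ or its reversal); p(b) = −1 if b = (a, τ₁⁻¹(a), τ₁(a)) or b = (a, τ₁(a), τ₁⁻¹(a)) for some a ∈ Fin 4; and p(b) = 0 otherwise. Then for every cyclic order y ∈ CO_4, the total score Σ_b p(b)·s_x(b, y) equals 4(x−1) if y ∈ {y₀, rev(y₀)}, equals −4(x−1) if y ∈ {y₁, rev(y₁)}, and equals 0 for the remaining reversal pair. -/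

import Mathlib

/-- The set of cyclic orders on `Fin n`: the left cosets of the cyclic subgroup
generated by the natural `n`-cycle `i ↦ i + 1` in the symmetric group. -/
abbrev CO (n : ℕ) := Equiv.Perm (Fin n) ⧸ Subgroup.zpowers (finRotate n)

/-- A ROLO ballot: a triple `(a, r, l)` of pairwise distinct elements of `Fin 4`
(`r` immediately to the right of `a`, `l` immediately to the left of `a`). -/
abbrev Ballot :=
  {t : Fin 4 × Fin 4 × Fin 4 // t.1 ≠ t.2.1 ∧ t.1 ≠ t.2.2 ∧ t.2.1 ≠ t.2.2}

/-- The successor permutation of a cyclic order `gH` is `g * c * g⁻¹`. -/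
def succPerm (x : CO 4) : Equiv.Perm (Fin 4) :=
  Quotient.liftOn' x (fun g => g * finRotate 4 * g⁻¹) (by
    intro g g' hgg'
    rw [QuotientGroup.leftRel_apply] at hgg'
    obtain ⟨k, hk⟩ := hgg'
    simp only at hk ⊢
    have h1 : g' = g * finRotate 4 ^ k := by rw [hk, mul_inv_cancel_left]
    subst h1
    have hc : Commute (finRotate 4 ^ k) (finRotate 4) :=
      (Commute.refl (finRotate 4)).zpow_left k
    have key : (finRotate 4 ^ k) * finRotate 4 * (finRotate 4 ^ k)⁻¹ = finRotate 4 := by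
      rw [hc.eq, mul_inv_cancel_right]
    calc g * finRotate 4 * g⁻¹
        = g * ((finRotate 4 ^ k) * finRotate 4 * (finRotate 4 ^ k)⁻¹) * g⁻¹ := by rw [key]
      _ = g * finRotate 4 ^ k * finRotate 4 * (g * finRotate 4 ^ k)⁻¹ := by group)

/-- The ROLO(x,1) score of a ballot `(a, r, l)` against a cyclic order with
successor permutation `τ`: `x` points if both `τ a = l` and `τ r = a` hold,
`1` point if exactly one of them holds, and `0` points otherwise. -/
def score (x : ℚ) (τ : Equiv.Perm (Fin 4)) (t : Fin 4 × Fin 4 × Fin 4) : ℚ :=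
  if τ t.1 = t.2.2 ∧ τ t.2.1 = t.1 then x
  else if τ t.1 = t.2.2 ∨ τ t.2.1 = t.1 then 1
  else 0

def mkT (f g : Fin 4 → Fin 4) (h : (∀ i, g (f i) = i) ∧ ∀ i, f (g i) = i) : Equiv.Perm (Fin 4) :=
  ⟨f, g, h.1, h.2⟩

def T : Fin 6 → Equiv.Perm (Fin 4) :=
  ![mkT ![1,2,3,0] ![3,0,1,2] (by decide), mkT ![3,0,1,2] ![1,2,3,0] (by decide),
    mkT ![1,3,0,2] ![2,0,3,1] (by decide), mkT ![2,0,3,1] ![1,3,0,2] (by decide),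
    mkT ![2,3,1,0] ![3,2,0,1] (by decide), mkT ![3,2,0,1] ![2,3,1,0] (by decide)]

def PP (τ : Equiv.Perm (Fin 4)) (b : Fin 4 × Fin 4 × Fin 4) : Prop :=
  ∃ a : Fin 4, b = (a, τ⁻¹ a, τ a) ∨ b = (a, τ a, τ⁻¹ a)

instance (τ : Equiv.Perm (Fin 4)) (b : Fin 4 × Fin 4 × Fin 4) : Decidable (PP τ b) := by
  unfold PP; infer_instance

set_option maxRecDepth 100000 in
set_option maxHeartbeats 4000000 in
theorem conj_T : ∀ g : Equiv.Perm (Fin 4), ∃ k, g * finRotate 4 * g⁻¹ = T k := by decide +kernel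

theorem succ_T (y : CO 4) : ∃ k, succPerm y = T k := by
  induction y using Quotient.inductionOn' with
  | h g => exact conj_T g

set_option maxRecDepth 100000 in
set_option maxHeartbeats 4000000 in
theorem cent : ∀ u : Equiv.Perm (Fin 4), u * finRotate 4 = finRotate 4 * u →
    ∃ k : Fin 4, finRotate 4 ^ (k : ℕ) = u := by decide +kernel

theorem succ_inj (y z : CO 4) (h : succPerm y = succPerm z) : y = z := by
  induction y using Quotient.inductionOn' with
  | h g =>
  induction z using Quotient.inductionOn' with
  | h g' =>
  have h' : g * finRotate 4 * g⁻¹ = g' * finRotate 4 * g'⁻¹ := h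
  apply Quotient.sound'
  rw [QuotientGroup.leftRel_apply]
  obtain ⟨k, hk⟩ := cent (g⁻¹ * g') (by
    have : g * finRotate 4 = g' * finRotate 4 * g'⁻¹ * g := by rw [← h']; group
    have h3 : finRotate 4 = g⁻¹ * (g' * finRotate 4 * g'⁻¹ * g) := by rw [← this]; group
    calc g⁻¹ * g' * finRotate 4 = g⁻¹ * (g' * finRotate 4 * g'⁻¹ * g) * (g⁻¹ * g') := by group
      _ = finRotate 4 * (g⁻¹ * g') := by rw [← h3])
  rw [← hk]
  exact Subgroup.npow_mem_zpowers _ _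

theorem card2 : ∀ i j : Fin 6,
    (Finset.univ.filter fun b : Ballot => PP (T i) b.1 ∧ (T j b.1.1 = b.1.2.2 ∧ T j b.1.2.1 = b.1.1)).card
      = (if T j = T i ∨ T j = (T i)⁻¹ then 4 else 0) ∧
    (Finset.univ.filter fun b : Ballot => PP (T i) b.1 ∧
      ¬ (T j b.1.1 = b.1.2.2 ∧ T j b.1.2.1 = b.1.1) ∧ (T j b.1.1 = b.1.2.2 ∨ T j b.1.2.1 = b.1.1)).card
      = (if T j = T i ∨ T j = (T i)⁻¹ then 0 else 4) := by decide +kernel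

theorem disj : ∀ i j : Fin 6, T j ≠ T i → T j ≠ (T i)⁻¹ → ∀ b : Ballot,
    PP (T i) b.1 → ¬ PP (T j) b.1 := by decide +kernel

theorem T_inv : ∀ i j : Fin 6, T j = (T i)⁻¹ → T i = (T j)⁻¹ := by
  intro i j h; rw [h, inv_inv]

theorem total (x : ℚ) (i j : Fin 6) :
    ∑ b : Ballot, (if PP (T i) b.1 then score x (T j) b.1 else 0)
      = if T j = T i ∨ T j = (T i)⁻¹ then 4 * x else 4 := by
  have h : ∀ b : Ballot, (if PP (T i) b.1 then score x (T j) b.1 else 0) =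
      (if PP (T i) b.1 ∧ (T j b.1.1 = b.1.2.2 ∧ T j b.1.2.1 = b.1.1) then (1:ℚ) else 0) * x +
      (if PP (T i) b.1 ∧ ¬ (T j b.1.1 = b.1.2.2 ∧ T j b.1.2.1 = b.1.1) ∧
        (T j b.1.1 = b.1.2.2 ∨ T j b.1.2.1 = b.1.1) then (1:ℚ) else 0) := by
    intro b
    unfold score
    by_cases h1 : PP (T i) b.1 <;>
    by_cases h2 : (T j b.1.1 = b.1.2.2 ∧ T j b.1.2.1 = b.1.1) <;>
    by_cases h3 : (T j b.1.1 = b.1.2.2 ∨ T j b.1.2.1 = b.1.1) <;>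
    simp only [h1, h2, h3] <;> simp
  rw [Finset.sum_congr rfl fun b _ => h b, Finset.sum_add_distrib, ← Finset.sum_mul,
    Finset.sum_boole, Finset.sum_boole, (card2 i j).1, (card2 i j).2]
  split_ifs <;> simp

theorem stmt_19 (x : ℚ) (y₀ y₁ : CO 4)
    (hy : y₁ ≠ y₀ ∧ succPerm y₁ ≠ (succPerm y₀)⁻¹) (p : Ballot → ℚ)
    (hp1 : ∀ b : Ballot,
      (∃ a : Fin 4, (b : Fin 4 × Fin 4 × Fin 4) = (a, (succPerm y₀)⁻¹ a, succPerm y₀ a) ∨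
        (b : Fin 4 × Fin 4 × Fin 4) = (a, succPerm y₀ a, (succPerm y₀)⁻¹ a)) →
      p b = 1)
    (hp2 : ∀ b : Ballot,
      (∃ a : Fin 4, (b : Fin 4 × Fin 4 × Fin 4) = (a, (succPerm y₁)⁻¹ a, succPerm y₁ a) ∨
        (b : Fin 4 × Fin 4 × Fin 4) = (a, succPerm y₁ a, (succPerm y₁)⁻¹ a)) →
      p b = -1)
    (hp0 : ∀ b : Ballot,
      (¬ ∃ a : Fin 4, (b : Fin 4 × Fin 4 × Fin 4) = (a, (succPerm y₀)⁻¹ a, succPerm y₀ a) ∨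
        (b : Fin 4 × Fin 4 × Fin 4) = (a, succPerm y₀ a, (succPerm y₀)⁻¹ a)) →
      (¬ ∃ a : Fin 4, (b : Fin 4 × Fin 4 × Fin 4) = (a, (succPerm y₁)⁻¹ a, succPerm y₁ a) ∨
        (b : Fin 4 × Fin 4 × Fin 4) = (a, succPerm y₁ a, (succPerm y₁)⁻¹ a)) →
      p b = 0)
    (y : CO 4) :
    ((y = y₀ ∨ succPerm y = (succPerm y₀)⁻¹) →
      ∑ b : Ballot, p b * score x (succPerm y) (b : Fin 4 × Fin 4 × Fin 4) = 4 * (x - 1)) ∧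
    ((y = y₁ ∨ succPerm y = (succPerm y₁)⁻¹) →
      ∑ b : Ballot, p b * score x (succPerm y) (b : Fin 4 × Fin 4 × Fin 4) = -(4 * (x - 1))) ∧
    ((y ≠ y₀ ∧ succPerm y ≠ (succPerm y₀)⁻¹ ∧ y ≠ y₁ ∧ succPerm y ≠ (succPerm y₁)⁻¹) →
      ∑ b : Ballot, p b * score x (succPerm y) (b : Fin 4 × Fin 4 × Fin 4) = 0) := by
  obtain ⟨hy1, hy2⟩ := hy
  have e : ∀ y z : CO 4, y = z ↔ succPerm y = succPerm z :=
    fun y z => ⟨fun h => h ▸ rfl, succ_inj y z⟩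
  simp only [ne_eq, e] at hy1 hy2 ⊢
  obtain ⟨i, hi⟩ := succ_T y₀
  obtain ⟨j, hj⟩ := succ_T y₁
  obtain ⟨k, hk⟩ := succ_T y
  rw [hi] at hp1 hp0 hy1 hy2 ⊢
  rw [hj] at hp2 hp0 hy1 hy2 ⊢
  rw [hk]
  have key : ∑ b : Ballot, p b * score x (T k) b.1 =
      (if T k = T i ∨ T k = (T i)⁻¹ then 4 * x else 4) -
      (if T k = T j ∨ T k = (T j)⁻¹ then 4 * x else 4) := by
    rw [← total, ← total, ← Finset.sum_sub_distrib]
    refine Finset.sum_congr rfl fun b _ => ?_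
    by_cases h0 : PP (T i) b.1
    · have h1 := disj i j hy1 hy2 b h0
      rw [hp1 b h0, if_pos h0, if_neg h1]; ring
    · by_cases h1 : PP (T j) b.1
      · rw [hp2 b h1, if_neg h0, if_pos h1]; ring
      · rw [hp0 b h0 h1, if_neg h0, if_neg h1]; ring
  rw [key]
  have hx : (T k = T i ∨ T k = (T i)⁻¹) → ¬ (T k = T j ∨ T k = (T j)⁻¹) := by
    rintro (a | a) (b | b)
    · exact hy1 (b.symm.trans a)
    · exact hy2 (by rw [← a, b, inv_inv])
    · exact hy2 (b.symm.trans a)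
    · exact hy1 (inv_injective (b.symm.trans a))
  refine ⟨fun h => ?_, fun h => ?_, fun h => ?_⟩
  · rw [if_pos h, if_neg (hx h)]; ring
  · rw [if_pos h, if_neg (fun h' => hx h' h)]; ring
  · rw [if_neg (by tauto), if_neg (by tauto)]; ring
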